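/- Let G₁,…,G_k be graphs that are pairwise consistent, and let r̄₁,…,r̄_k be rotation sequences that are pairwise consistent (i.e., whenever two of them act upon a common vertex u, the compositions (r̄_i/u) of their rotations at u coincide), such that the rotated graphs r̄₁G₁,…,r̄_kG_k are also pairwise consistent. Then there exists a rotation sequence r̄ such that ⋃_{i=1}^{k} r̄_i G_i = r̄ (⋃_{i=1}^{k} G_i). -/

import Mathlib

namespace CDDM

open Equiv Set

/-- The set of ports `π = {0,…,n+1}`. -/
abbrev Port (n : ℕ) := Fin (n + 2)

/-- Gluings are the odd permutations of the ports. -/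
def IsGluing {n : ℕ} (γ : Equiv.Perm (Port n)) : Prop := Equiv.Perm.sign γ = -1

/-- Rotations are the even permutations of the ports. -/
def IsRotation {n : ℕ} (r : Equiv.Perm (Port n)) : Prop := Equiv.Perm.sign r = 1

/-- An (oriented) edge `(u:p, γ, v:q)`. -/
@[ext] structure Edge (n : ℕ) (α : Type) where
  u : α
  p : Port n
  γ : Equiv.Perm (Port n)
  v : α
  q : Port n

/-- The inverse edge `(v:q, γ⁻¹, u:p)`. -/
def Edge.inv {n : ℕ} {α : Type} (e : Edge n α) : Edge n α := ⟨e.v, e.q, e.γ⁻¹, e.u, e.p⟩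

/-- Raw data of a graph: vertices, semi-edges and edges. -/
@[ext] structure RawGraph (n : ℕ) (α : Type) where
  verts : Set α
  semis : Set (α × Port n)
  edges : Set (Edge n α)

variable {n : ℕ} {α β : Type}

/-- The ports of a vertex: those appearing in `S(G) ∪ E(G)`. -/
def RawGraph.portsAt (G : RawGraph n α) (u : α) : Set (Port n) :=
  {p | (u, p) ∈ G.semis ∨ ∃ e ∈ G.edges, e.u = u ∧ e.p = p}

/-- The five defining conditions of graphs (plus membership of endpoints and
gluings being odd permutations). -/
def RawGraph.IsGraph (G : RawGraph n α) : Prop :=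
  (∀ s ∈ G.semis, s.1 ∈ G.verts) ∧
  (∀ e ∈ G.edges, e.u ∈ G.verts ∧ e.v ∈ G.verts ∧ IsGluing e.γ) ∧
  -- (i) semi-edges and edges are disjoint per port
  (∀ e ∈ G.edges, (e.u, e.p) ∉ G.semis) ∧
  -- (ii) each port occurs in at most one edge
  (∀ e ∈ G.edges, ∀ e' ∈ G.edges, e.u = e'.u → e.p = e'.p → e = e') ∧
  -- (iii) each vertex has exactly n+1 ports
  (∀ u ∈ G.verts, (G.portsAt u).ncard = n + 1) ∧
  -- (iv) the gluing maps the ports of the source onto the ports of the target, sending p to q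
  (∀ e ∈ G.edges, (⇑e.γ) '' G.portsAt e.u = G.portsAt e.v ∧ e.γ e.p = e.q) ∧
  -- (v) edges come in inverse pairs
  (∀ e ∈ G.edges, e.inv ∈ G.edges)

/-- Action of the vertex rotation `r_u` on a single edge. -/
noncomputable def rotEdge (r : Equiv.Perm (Port n)) (u : α) (e : Edge n α) : Edge n α :=
  letI := Classical.decEq α
  ⟨e.u, if e.u = u then r e.p else e.p,
   (if e.v = u then r * e.γ else e.γ) * (if e.u = u then r⁻¹ else 1),
   e.v, if e.v = u then r e.q else e.q⟩

/-- The vertex rotation `r_u` applied to a graph. -/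
noncomputable def rotG (r : Equiv.Perm (Port n)) (u : α) (G : RawGraph n α) : RawGraph n α :=
  letI := Classical.decEq α
  { verts := G.verts
    semis := (fun s => if s.1 = u then (s.1, r s.2) else s) '' G.semis
    edges := rotEdge r u '' G.edges }

/-- A rotation sequence: a finite composition of vertex rotations. -/
abbrev RotSeq (n : ℕ) (α : Type) := List (α × Equiv.Perm (Port n))

/-- Application of a rotation sequence to a graph. -/
noncomputable def applySeq (s : RotSeq n α) (G : RawGraph n α) : RawGraph n α :=
  s.foldr (fun x H => rotG x.2 x.1 H) G

/-- All members of the sequence are rotations (even permutations). -/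
def IsRotSeq (s : RotSeq n α) : Prop := ∀ x ∈ s, IsRotation x.2

/-- `(r̄ / u)`: the ordered composition of the rotations of `r̄` at the vertex `u`. -/
noncomputable def seqAt (s : RotSeq n α) (u : α) : Equiv.Perm (Port n) :=
  letI := Classical.decEq α
  s.foldr (fun x g => if x.1 = u then x.2 * g else g) 1

/-- The rotation sequence acts at vertex `u`. -/
def SeqActsAt (s : RotSeq n α) (u : α) : Prop := ∃ x ∈ s, x.1 = u

/-- Consistency of two rotation sequences: whenever both act upon a common vertex,
their compositions at that vertex coincide. -/
def SeqConsistent (s₁ s₂ : RotSeq n α) : Prop :=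
  ∀ u : α, SeqActsAt s₁ u → SeqActsAt s₂ u → seqAt s₁ u = seqAt s₂ u

/-- The inverse of a rotation sequence. -/
def invSeq (s : RotSeq n α) : RotSeq n α := (s.map (fun x => (x.1, x.2⁻¹))).reverse

/-- Consistency of two graphs. -/
def Consistent (G H : RawGraph n α) : Prop :=
  ∀ u ∈ G.verts ∩ H.verts, ∀ v ∈ G.verts ∪ H.verts,
    ∀ (i j : Port n) (γ : Equiv.Perm (Port n)),
      (Edge.mk u i γ v j ∈ G.edges ∨ (u, i) ∈ G.semis) ↔
      (Edge.mk u i γ v j ∈ H.edges ∨ (u, i) ∈ H.semis)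

/-- Union of two (consistent) graphs: semi-edges are the ports occurring as
semi-edges in `G` or `H` and in no edge of `E(G) ∪ E(H)`. -/
def unionG (G H : RawGraph n α) : RawGraph n α where
  verts := G.verts ∪ H.verts
  semis := {s | s ∈ G.semis ∪ H.semis ∧ ∀ e ∈ G.edges ∪ H.edges, ¬(e.u = s.1 ∧ e.p = s.2)}
  edges := G.edges ∪ H.edges

/-- Union of a family of graphs. -/
def unionFam {ι : Type} (Gs : ι → RawGraph n α) : RawGraph n α where
  verts := ⋃ i, (Gs i).verts
  semis := {s | (∃ i, s ∈ (Gs i).semis) ∧ ∀ i, ∀ e ∈ (Gs i).edges, ¬(e.u = s.1 ∧ e.p = s.2)}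
  edges := ⋃ i, (Gs i).edges

/-- A path of `k` edges `(u_i:p_i, γ_{i+1}, u_{i+1}:q_{i+1})` in `G`. -/
def IsPath (G : RawGraph n α) (k : ℕ) (u : Fin (k+1) → α)
    (p : Fin k → Port n) (γ : Fin k → Equiv.Perm (Port n)) (q : Fin k → Port n) : Prop :=
  ∀ i : Fin k, Edge.mk (u i.castSucc) (p i) (γ i) (u i.succ) (q i) ∈ G.edges

/-- `γ_i ∘ ⋯ ∘ γ_1`: the composition of the first `i` gluings of the path. -/
def compUpTo {n k : ℕ} (γ : Fin k → Equiv.Perm (Port n)) (i : ℕ) : Equiv.Perm (Port n) :=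
  (((List.ofFn γ).take i).reverse).prod

/-- The hinge conditions: `p_i, q_i ∉ (γ_i ∘ ⋯ ∘ γ_1)(F)`. -/
def HingeConds {n k : ℕ} (p : Fin k → Port n) (γ : Fin k → Equiv.Perm (Port n))
    (q : Fin k → Port n) (F : Set (Port n)) : Prop :=
  ∀ i : Fin k, p i ∉ (⇑(compUpTo γ i.val)) '' F ∧ q i ∉ (⇑(compUpTo γ (i.val + 1))) '' F

/-- A hinge of length `k` starting at the face `F` at `u 0`. -/
def IsHinge (G : RawGraph n α) (k : ℕ) (u : Fin (k+1) → α)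
    (p : Fin k → Port n) (γ : Fin k → Equiv.Perm (Port n)) (q : Fin k → Port n)
    (F : Set (Port n)) : Prop :=
  IsPath G k u p γ q ∧ F.Nonempty ∧ F ⊆ G.portsAt (u 0) ∧ HingeConds p γ q F

/-- Equivalence of faces: `F` at `u` and `F'` at `u'` are related by a hinge. -/
def EquivFace (G : RawGraph n α) (u : α) (F : Set (Port n)) (u' : α) (F' : Set (Port n)) :
    Prop :=
  ∃ (k : ℕ) (w : Fin (k+1) → α) (p : Fin k → Port n) (γ : Fin k → Equiv.Perm (Port n))
    (q : Fin k → Port n), IsHinge G k w p γ q F ∧ w 0 = u ∧ w (Fin.last k) = u' ∧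
      F' = (⇑(compUpTo γ k)) '' F

/-- A torsion: a hinge around two distinct faces at the same vertex. -/
def HasTorsion (G : RawGraph n α) : Prop :=
  ∃ (u : α) (F F' : Set (Port n)), F ≠ F' ∧ EquivFace G u F u F'

/-- `s`-bounded-star: every hinge has length at most `s`. -/
def BoundedStar (G : RawGraph n α) (s : ℕ) : Prop :=
  ∀ (k : ℕ) (u : Fin (k+1) → α) (p : Fin k → Port n) (γ : Fin k → Equiv.Perm (Port n))
    (q : Fin k → Port n) (F : Set (Port n)), IsHinge G k u p γ q F → k ≤ s

/-- A path is in normal form. -/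
def NormalForm (G : RawGraph n α) {k : ℕ} (u : Fin (k+1) → α)
    (p : Fin k → Port n) (γ : Fin k → Equiv.Perm (Port n)) (q : Fin k → Port n) : Prop :=
  ∀ i : Fin k, γ i = Equiv.swap (p i) (q i) ∧
    G.portsAt (u i.succ) = insert (q i) (G.portsAt (u i.castSucc) \ {p i})

/-- The covering semi-edges of a face `F` at `u`. -/
def coveringSemis (G : RawGraph n α) (u : α) (F : Set (Port n)) : Set (α × Port n) :=
  {s | s ∈ G.semis ∧ ∃ F', EquivFace G u F s.1 F' ∧ s.2 ∉ F'}

/-- Geometrical neighbors: vertices sharing an equivalent face. -/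
def GeomNeighbor (G : RawGraph n α) (u u' : α) : Prop :=
  ∃ F F', EquivFace G u F u' F'

/-- Induced subgraph on a set of vertices, breaking outgoing edges into semi-edges. -/
def inducedSub (G : RawGraph n α) (W : Set α) : RawGraph n α where
  verts := G.verts ∩ W
  semis := {s | s.1 ∈ G.verts ∩ W ∧
    (s ∈ G.semis ∨ ∃ e ∈ G.edges, e.u = s.1 ∧ e.p = s.2 ∧ e.v ∉ W)}
  edges := {e ∈ G.edges | e.u ∈ W ∧ e.v ∈ W}

/-- The star of a vertex: the subgraph induced by `u` and its geometrical neighbors. -/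
def geomStar (G : RawGraph n α) (u : α) : RawGraph n α :=
  inducedSub G {v | v = u ∨ GeomNeighbor G u v}

/-- Adjacency via edges. -/
def Adj (G : RawGraph n α) (u v : α) : Prop := ∃ e ∈ G.edges, e.u = u ∧ e.v = v

/-- Graph distance at most `d`. -/
inductive ReachLE (G : RawGraph n α) : ℕ → α → α → Prop
  | refl (d : ℕ) (u : α) : ReachLE G d u u
  | step {d : ℕ} {u v w : α} : Adj G u v → ReachLE G d v w → ReachLE G (d+1) u w

/-- The ball of radius `d` around `v`. -/
def ball (G : RawGraph n α) (v : α) (d : ℕ) : Set α := {u | ReachLE G d v u}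

/-- The disk `G^r_v`: subgraph induced by vertices at graph distance at most `r+1`,
with outgoing edges broken into semi-edges. -/
def disk (G : RawGraph n α) (v : α) (r : ℕ) : RawGraph n α :=
  inducedSub G (ball G v (r+1))

/-- Being a disk of radius `r` (an element of `D^r`). -/
def IsDisk (D : RawGraph n α) (r : ℕ) : Prop :=
  ∃ (G : RawGraph n α) (v : α), G.IsGraph ∧ v ∈ G.verts ∧ D = disk G v r

/-- Subgraph relation. -/
def Subgraph (H G : RawGraph n α) : Prop := H.verts ⊆ G.verts ∧ H.edges ⊆ G.edges

/-- Compound names: finite sets of pairs `(u, i)` representing `{u.i, v.j, …}`. -/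
abbrev CName := Finset (ℕ × ℕ)

/-- Renaming of graphs along a map on vertex names. -/
def mapG (R : α → β) (G : RawGraph n α) : RawGraph n β where
  verts := R '' G.verts
  semis := (fun s => (R s.1, s.2)) '' G.semis
  edges := (fun e => Edge.mk (R e.u) e.p e.γ (R e.v) e.q) '' G.edges

/-- `R*`: renaming of compound names. -/
def mapCN (R : ℕ → ℕ) (c : CName) : CName := c.image (fun x => (R x.1, x.2))

/-- A local rule of radius `r` over the universe of names `ℕ`, with bound `b`. -/
structure LocalRule (n r : ℕ) where
  f : RawGraph n ℕ → RawGraph n CName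
  b : ℕ
  isGraph : ∀ D, IsDisk D r → (f D).IsGraph
  bound : ∀ D, IsDisk D r → ∀ c ∈ (f D).verts, ∀ x ∈ c, x.1 ∈ D.verts ∧ x.2 ≤ b
  consist : ∀ G : RawGraph n ℕ, G.IsGraph → ∀ v ∈ G.verts, ∀ w ∈ G.verts,
    Consistent (f (disk G v r)) (f (disk G w r))
  equivar : ∀ R : ℕ ≃ ℕ, ∀ D, IsDisk D r → f (mapG R D) = mapG (mapCN R) (f D)

/-- The global dynamics induced by a local rule: `F(G) = ⋃_{v ∈ G} f(G^r_v)`. -/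
noncomputable def induced (f : RawGraph n ℕ → RawGraph n CName) (r : ℕ)
    (G : RawGraph n ℕ) : RawGraph n CName :=
  unionFam (fun v : G.verts => f (disk G (v : ℕ) r))

/-- A dynamics is rotation-commuting. -/
def RotCommuting {n : ℕ} (F : RawGraph n ℕ → RawGraph n CName) : Prop :=
  ∀ G : RawGraph n ℕ, G.IsGraph → ∀ s : RotSeq n ℕ, IsRotSeq s →
    ∃ s' : RotSeq n CName, IsRotSeq s' ∧ F (applySeq s G) = applySeq s' (F G)

/-- An intersecting pair of disks `D₁, D₂` of a common graph. -/
def IntersectingDiskPair (r : ℕ) (D₁ D₂ : RawGraph n ℕ) : Prop :=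
  ∃ (G : RawGraph n ℕ) (v₁ v₂ : ℕ), G.IsGraph ∧ v₁ ∈ G.verts ∧ v₂ ∈ G.verts ∧
    D₁ = disk G v₁ r ∧ D₂ = disk G v₂ r ∧ (D₁.verts ∩ D₂.verts).Nonempty

/-- A local rule is strongly-rotation-commuting. -/
def StronglyRotCommuting {n r : ℕ} (L : LocalRule n r) : Prop :=
  (∀ D, IsDisk D r → ∀ s : RotSeq n ℕ, IsRotSeq s →
    ∃ s' : RotSeq n CName, IsRotSeq s' ∧ L.f (applySeq s D) = applySeq s' (L.f D)) ∧
  (∀ D₁ D₂, IntersectingDiskPair r D₁ D₂ → ∀ s : RotSeq n ℕ, IsRotSeq s →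
    ∀ s₁ s₂ : RotSeq n CName, IsRotSeq s₁ → IsRotSeq s₂ →
      L.f (applySeq s D₁) = applySeq s₁ (L.f D₁) →
      L.f (applySeq s D₂) = applySeq s₂ (L.f D₂) →
      ∀ c ∈ (L.f D₁).verts ∩ (L.f D₂).verts, seqAt s₁ c = seqAt s₂ c)

/-- The transposition `s₀₁` of the ports 0 and 1. -/
def sw01 (n : ℕ) : Equiv.Perm (Port n) := Equiv.swap 0 1

/-- The canonical sphere `∂Δ_{n+1}` on the vertex names `φ 0, …, φ (n+1)`. -/
def sphereAt {n : ℕ} {α : Type} (φ : Fin (n+2) → α) : RawGraph n α where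
  verts := Set.range φ
  semis := ∅
  edges := {e | ∃ i j : Fin (n+2), i ≠ j ∧ e = ⟨φ i, j, Equiv.swap i j, φ j, i⟩}

/-- A bistellar move: replacing the part `H = φ '' W` of a canonical sphere lying in `G`
by its complement `s̄ H*`. -/
def BistellarMove (G G' : RawGraph n α) : Prop :=
  ∃ (φ : Fin (n+2) → α) (W : Set (Fin (n+2))),
    Function.Injective φ ∧ W.Nonempty ∧ W ≠ Set.univ ∧
    (∀ i ∈ W, φ i ∈ G.verts) ∧ (∀ i ∉ W, φ i ∉ G.verts) ∧
    (∀ i ∈ W, ∀ j ∈ W, i ≠ j → Edge.mk (φ i) j (Equiv.swap i j) (φ j) i ∈ G.edges) ∧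
    (∀ i ∈ W, G.portsAt (φ i) = {j | j ≠ i}) ∧
    G'.verts = (G.verts \ (φ '' W)) ∪ (φ '' Wᶜ) ∧
    G'.edges =
      ({e ∈ G.edges | e.u ∉ φ '' W ∧ e.v ∉ φ '' W} ∪
       {e | ∃ i j : Fin (n+2), i ∉ W ∧ j ∉ W ∧ i ≠ j ∧
          e = Edge.mk (φ i) (sw01 n j) (sw01 n * Equiv.swap i j * sw01 n) (φ j) (sw01 n i)} ∪
       {e | ∃ e' ∈ G.edges, ∃ i ∈ W, e'.u = φ i ∧ e'.v ∉ φ '' W ∧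
          (e = Edge.mk (φ e'.p) (sw01 n i) (e'.γ * (Equiv.swap i e'.p * sw01 n)) e'.v e'.q ∨
           e = Edge.mk e'.v e'.q (e'.γ * (Equiv.swap i e'.p * sw01 n))⁻¹ (φ e'.p) (sw01 n i))}) ∧
    G'.semis =
      ({s ∈ G.semis | s.1 ∉ φ '' W} ∪
       {s | ∃ j ∈ W, ∃ p : Fin (n+2), p ∉ W ∧ (φ j, p) ∈ G.semis ∧ s = (φ p, sw01 n j)})

/-- A graph-local inverse shelling: gluing a fresh vertex `v` onto a set `S` of at most `n`
free ports of `u`, via the gluing `s₀₁`. -/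
def LocalInvShelling (G G' : RawGraph n α) : Prop :=
  ∃ u ∈ G.verts, ∃ (S : Set (Port n)) (v : α),
    v ∉ G.verts ∧ S.ncard ≤ n ∧ (∀ p ∈ S, (u, p) ∈ G.semis) ∧
    G'.verts = insert v G.verts ∧
    G'.edges = G.edges ∪ {e | ∃ p ∈ S, e = Edge.mk u p (sw01 n) v (sw01 n p) ∨
                                        e = Edge.mk v (sw01 n p) (sw01 n) u p} ∧
    G'.semis = (G.semis \ {s | s.1 = u ∧ s.2 ∈ S}) ∪
               {s | ∃ p ∈ G.portsAt u \ S, s = (v, sw01 n p)}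

/-- Graph-local Pachner moves: vertex rotations, bistellar moves, and
graph-local (inverse) shellings. -/
inductive PachnerMove (n : ℕ) {α : Type} : RawGraph n α → RawGraph n α → Prop
  | rot {G : RawGraph n α} {r : Equiv.Perm (Port n)} {u : α} :
      IsRotation r → u ∈ G.verts → PachnerMove n G (rotG r u G)
  | bist {G G' : RawGraph n α} : BistellarMove G G' → PachnerMove n G G'
  | bistInv {G G' : RawGraph n α} : BistellarMove G' G → PachnerMove n G G'
  | shellInv {G G' : RawGraph n α} : LocalInvShelling G G' → PachnerMove n G G'
  | shell {G G' : RawGraph n α} : LocalInvShelling G' G → PachnerMove n G G'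

/-- `Δ_n`: a single vertex, all of whose `n+1` ports are semi-edges. -/
def IsSimplexGraph (G : RawGraph n α) : Prop :=
  ∃ (v : α) (P : Set (Port n)), P.ncard = n + 1 ∧ G.verts = {v} ∧ G.edges = ∅ ∧
    G.semis = {s | s.1 = v ∧ s.2 ∈ P}

/-- A discrete manifold: the star of every vertex can be sent onto `Δ_n` by
graph-local Pachner moves. -/
def DiscreteManifold (G : RawGraph n α) : Prop :=
  G.IsGraph ∧ ∀ u ∈ G.verts,
    ∃ H : RawGraph n α, Relation.ReflTransGen (PachnerMove n) (geomStar G u) H ∧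
      IsSimplexGraph H

/-- A standard inverse shelling `G.F` at a border `k`-face `F` at `u` having exactly
`n-k` covering semi-edges. -/
def StdInvShelling (G G' : RawGraph n α) : Prop :=
  ∃ u ∈ G.verts, ∃ (F : Set (Port n)) (k : ℕ),
    F ⊆ G.portsAt u ∧ F.ncard = k + 1 ∧
    (coveringSemis G u F).Nonempty ∧ (coveringSemis G u F).ncard = n - k ∧
    ∃ v : α, v ∉ G.verts ∧ G'.IsGraph ∧ ¬ HasTorsion G' ∧
      G'.verts = insert v G.verts ∧
      G'.edges = G.edges ∪ {e | ∃ s ∈ coveringSemis G u F,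
        e = Edge.mk s.1 s.2 (sw01 n) v (sw01 n s.2) ∨
        e = Edge.mk v (sw01 n s.2) (sw01 n) s.1 s.2} ∧
      (∀ s : α × Port n, s.1 ≠ v → (s ∈ G'.semis ↔ s ∈ G.semis ∧ s ∉ coveringSemis G u F))

/-- Simultaneous rotation of an edge. -/
def actE (ρ : α → Equiv.Perm (Port n)) (e : Edge n α) : Edge n α :=
  ⟨e.u, ρ e.u e.p, ρ e.v * e.γ * (ρ e.u)⁻¹, e.v, ρ e.v e.q⟩

/-- Simultaneous rotation of a graph. -/
def actG (ρ : α → Equiv.Perm (Port n)) (G : RawGraph n α) : RawGraph n α where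
  verts := G.verts
  semis := (fun s => (s.1, ρ s.1 s.2)) '' G.semis
  edges := actE ρ '' G.edges

theorem applySeq_eq (s : RotSeq n α) (G : RawGraph n α) :
    applySeq s G = actG (seqAt s) G := by
  classical
  induction s with
  | nil =>
    ext x
    · simp [applySeq, actG]
    · simp [applySeq, actG, seqAt]
    · have : actE (seqAt ([] : RotSeq n α)) = id := by
        funext e; simp [actE, seqAt]
      simp [applySeq, actG, this]
  | cons a s ih =>
    have h1 : applySeq (a :: s) G = rotG a.2 a.1 (applySeq s G) := rfl
    have h2 : ∀ w, seqAt (a :: s) w = if a.1 = w then a.2 * seqAt s w else seqAt s w := by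
      intro w
      simp only [seqAt, List.foldr_cons]
    rw [h1, ih]
    have hS : (fun x : α × Port n => (x.1, seqAt (a :: s) x.1 x.2))
        = (fun x : α × Port n => if x.1 = a.1 then (x.1, a.2 x.2) else x) ∘
          (fun x => (x.1, seqAt s x.1 x.2)) := by
      funext x
      by_cases hx : a.1 = x.1
      · simp [h2, ← hx]
      · simp [h2, hx, Ne.symm hx]
    have hE : actE (seqAt (a :: s)) = rotEdge a.2 a.1 ∘ actE (seqAt s) := by
      funext e
      by_cases hx : a.1 = e.u <;> by_cases hy : a.1 = e.v
      · simp [h2, actE, rotEdge, ← hx, ← hy, mul_assoc]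
      · simp [h2, actE, rotEdge, ← hx, hy, Ne.symm hy, mul_assoc]
      · simp [h2, actE, rotEdge, hx, ← hy, Ne.symm hx, mul_assoc]
      · simp [h2, actE, rotEdge, hx, hy, Ne.symm hx, Ne.symm hy, mul_assoc]
    simp only [actG, rotG, hS, hE, Set.image_comp, RawGraph.mk.injEq, true_and, and_true]

/-- The part of being a graph that we need. -/
structure Good (G : RawGraph n α) : Prop where
  sv : ∀ s ∈ G.semis, s.1 ∈ G.verts
  eu : ∀ e ∈ G.edges, e.u ∈ G.verts
  ev : ∀ e ∈ G.edges, e.v ∈ G.verts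
  sgn : ∀ e ∈ G.edges, Equiv.Perm.sign e.γ = -1
  dj : ∀ e ∈ G.edges, (e.u, e.p) ∉ G.semis

theorem Good.act {G : RawGraph n α} (h : Good G) (ρ : α → Equiv.Perm (Port n))
    (hρ : ∀ w, Equiv.Perm.sign (ρ w) = 1) : Good (actG ρ G) := by
  constructor
  · rintro _ ⟨s, hs, rfl⟩; exact h.sv s hs
  · rintro _ ⟨e, he, rfl⟩; exact h.eu e he
  · rintro _ ⟨e, he, rfl⟩; exact h.ev e he
  · rintro _ ⟨e, he, rfl⟩; simp [actE, hρ, h.sgn e he]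
  · rintro _ ⟨e, he, rfl⟩ ⟨⟨a, b⟩, hs, h2⟩
    simp only [actE, Prod.mk.injEq] at h2
    obtain ⟨rfl, h3⟩ := h2
    have := (ρ e.u).injective h3
    subst this
    exact h.dj e he hs

theorem Good.semi {G H : RawGraph n α} (hG : Good G) (hH : Good H) (hc : Consistent G H)
    {x : α × Port n} (hx : x.1 ∈ H.verts) (hs : x ∈ G.semis) : x ∈ H.semis := by
  have := (hc x.1 ⟨hG.sv x hs, hx⟩ x.1 (Or.inr hx) x.2 0 1).1 (Or.inr hs)
  rcases this with h | h
  · have := hH.sgn _ h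
    simp at this
  · exact h

theorem Good.edge {G H : RawGraph n α} (hG : Good G) (hH : Good H) (hc : Consistent G H)
    (hc' : Consistent H G)
    {e : Edge n α} (hx : e.u ∈ H.verts) (he : e ∈ G.edges) : e ∈ H.edges := by
  rcases (hc e.u ⟨hG.eu e he, hx⟩ e.v (Or.inl (hG.ev e he)) e.p e.q e.γ).1 (Or.inl he) with h | h
  · exact h
  · exact absurd (hH.semi hG hc' (x := (e.u, e.p)) (hG.eu e he) h) (hG.dj e he)

theorem mem_semis_unionFam {ι : Type} {G : ι → RawGraph n α} (hG : ∀ i, Good (G i))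
    (hc : ∀ i j, Consistent (G i) (G j)) (x : α × Port n) :
    x ∈ (unionFam G).semis ↔ ∃ i, x ∈ (G i).semis := by
  constructor
  · exact fun h => h.1
  · rintro ⟨i, hi⟩
    refine ⟨⟨i, hi⟩, ?_⟩
    rintro j e he ⟨h1, h2⟩
    have hxi := (hG i).sv x hi
    have := (hG j).edge (hG i) (hc _ _) (hc _ _) (h1 ▸ hxi) he
    apply (hG i).dj e this
    rw [h1, h2]; exact hi

theorem sign_seqAt (s : RotSeq n α) (hs : IsRotSeq s) (w : α) :
    Equiv.Perm.sign (seqAt s w) = 1 := by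
  classical
  induction s with
  | nil => simp [seqAt]
  | cons a s ih =>
    have h2 : seqAt (a :: s) w = if a.1 = w then a.2 * seqAt s w else seqAt s w := by
      simp only [seqAt, List.foldr_cons]
    have i1 := ih (fun x hx => hs x (List.mem_cons_of_mem _ hx))
    have i2 : Equiv.Perm.sign a.2 = 1 := hs a List.mem_cons_self
    rw [h2]; split_ifs <;> simp [i1, i2]

theorem seqAt_append (s t : RotSeq n α) (w : α) :
    seqAt (s ++ t) w = seqAt s w * seqAt t w := by
  classical
  induction s with
  | nil => simp [seqAt]
  | cons a s ih =>
    have h2 : ∀ s : RotSeq n α,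
        seqAt (a :: s) w = if a.1 = w then a.2 * seqAt s w else seqAt s w := by
      intro s
      simp only [seqAt, List.foldr_cons]
    rw [List.cons_append, h2, h2, ih]
    split_ifs <;> simp [mul_assoc]

theorem seqAt_flatten (L : List (RotSeq n α)) (w : α) :
    seqAt L.flatten w = (L.map (fun s => seqAt s w)).prod := by
  induction L with
  | nil => simp [seqAt]
  | cons a L ih => simp [seqAt_append, ih]

theorem seqAt_filter (P : α → Bool) (s : RotSeq n α) (w : α) :
    seqAt (s.filter (fun x => P x.1)) w = if P w then seqAt s w else 1 := by
  classical
  induction s with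
  | nil => simp [seqAt]
  | cons a s ih =>
    have h2 : ∀ s : RotSeq n α,
        seqAt (a :: s) w = if a.1 = w then a.2 * seqAt s w else seqAt s w := by
      intro s
      simp only [seqAt, List.foldr_cons]
    rw [List.filter_cons]
    by_cases hw : a.1 = w
    · by_cases hP : P w <;> simp_all
    · by_cases hP : P a.1 <;> simp_all

theorem exists_merge_seq {k : ℕ} (s : Fin k → RotSeq n α) (hs : ∀ i, IsRotSeq (s i))
    (M : Fin k → α → Prop) (hM : ∀ i j w, M i w → M j w → i = j) :
    ∃ t : RotSeq n α, IsRotSeq t ∧ ∀ i w, M i w → seqAt t w = seqAt (s i) w := by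
  classical
  refine ⟨((List.finRange k).map
    (fun i => (s i).filter (fun x => decide (M i x.1)))).flatten, ?_, ?_⟩
  · intro x hx
    simp only [List.mem_flatten, List.mem_map] at hx
    obtain ⟨l, ⟨i, -, rfl⟩, hx⟩ := hx
    exact hs i x (List.mem_of_mem_filter hx)
  · intro i w hi
    rw [seqAt_flatten, List.map_map, List.prod_map_eq_pow_single i]
    · have : (List.finRange k).count i = 1 :=
        List.count_eq_one_of_mem (List.nodup_finRange k) (List.mem_finRange i)
      rw [this, pow_one]
      simp only [Function.comp]
      rw [seqAt_filter (fun x => decide (M i x))]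
      simp [hi]
    · intro j hj _
      simp only [Function.comp]
      rw [seqAt_filter (fun x => decide (M j x))]
      have : ¬ M j w := fun h => hj (hM _ _ _ h hi)
      simp [this]

theorem exists_min {k : ℕ} (G : Fin k → RawGraph n α) (w : α) (i : Fin k)
    (h : w ∈ (G i).verts) : ∃ m, w ∈ (G m).verts ∧ ∀ j < m, w ∉ (G j).verts := by
  obtain ⟨m, hm, h2⟩ := WellFounded.has_min (wellFounded_lt (α := Fin k))
    {j | w ∈ (G j).verts} ⟨i, h⟩
  exact ⟨m, hm, fun j hj hw => h2 j hw hj⟩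

/-- Consistent rotation sequences applied to consistent graphs merge into
a single rotation sequence applied to the union. -/
theorem rotation_sequences_merge {n : ℕ} {α : Type} (k : ℕ)
    (G : Fin k → RawGraph n α) (s : Fin k → RotSeq n α)
    (hG : ∀ i, (G i).IsGraph) (hs : ∀ i, IsRotSeq (s i))
    (hdom : ∀ i, ∀ x ∈ s i, x.1 ∈ (G i).verts)
    (hGc : ∀ i j, Consistent (G i) (G j))
    (hsc : ∀ i j, SeqConsistent (s i) (s j))
    (hrot : ∀ i j, Consistent (applySeq (s i) (G i)) (applySeq (s j) (G j))) :
    ∃ t : RotSeq n α, IsRotSeq t ∧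
      unionFam (fun i => applySeq (s i) (G i)) = applySeq t (unionFam G) := by
  have gG : ∀ i, Good (G i) := fun i =>
    ⟨(hG i).1, fun e he => ((hG i).2.1 e he).1, fun e he => ((hG i).2.1 e he).2.1,
      fun e he => ((hG i).2.1 e he).2.2, (hG i).2.2.1⟩
  simp only [applySeq_eq] at hrot ⊢
  have gR : ∀ i, Good (actG (seqAt (s i)) (G i)) := fun i =>
    (gG i).act _ (sign_seqAt _ (hs i))
  obtain ⟨t, ht, hM⟩ := exists_merge_seq s hs
    (fun m w => w ∈ (G m).verts ∧ ∀ j < m, w ∉ (G j).verts) (by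
      rintro i j w ⟨h1, h2⟩ ⟨h3, h4⟩
      rcases lt_trichotomy i j with h | h | h
      · exact absurd h1 (h4 _ h)
      · exact h
      · exact absurd h3 (h2 _ h))
  refine ⟨t, ht, ?_⟩
  have key : ∀ m, ∀ e ∈ (G m).edges, (∀ j < m, e.u ∉ (G j).verts) →
      actE (seqAt t) e = actE (seqAt (s m)) e := by
    intro m e he hlt
    have h1 := hM m e.u ⟨(gG m).eu e he, hlt⟩
    have h2 := hM m e.v ⟨(gG m).ev e he, fun j hj hv => by
      have hinv := (hG m).2.2.2.2.2.2 e he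
      have := (gG m).edge (gG j) (hGc _ _) (hGc _ _) (e := e.inv) hv hinv
      exact hlt j hj ((gG j).ev _ this)⟩
    simp [actE, h1, h2]
  apply RawGraph.ext
  · rfl
  · ext x
    rw [mem_semis_unionFam gR hrot]
    constructor
    · rintro ⟨i, hi⟩
      obtain ⟨m, hm, hlt⟩ := exists_min G x.1 i ((gR i).sv x hi)
      obtain ⟨y, hy, rfl⟩ := (gR i).semi (gR m) (hrot _ _) hm hi
      refine ⟨y, (mem_semis_unionFam gG hGc y).2 ⟨m, hy⟩, ?_⟩
      simp only
      rw [hM m y.1 ⟨hm, hlt⟩]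
    · rintro ⟨y, hy, rfl⟩
      obtain ⟨i, hi⟩ := (mem_semis_unionFam gG hGc y).1 hy
      obtain ⟨m, hm, hlt⟩ := exists_min G y.1 i ((gG i).sv y hi)
      refine ⟨m, y, (gG i).semi (gG m) (hGc _ _) hm hi, ?_⟩
      simp only
      rw [hM m y.1 ⟨hm, hlt⟩]
  · ext x
    simp only [unionFam, actG, Set.mem_iUnion, Set.mem_image]
    constructor
    · rintro ⟨i, hi⟩
      have hi' : x ∈ (actG (seqAt (s i)) (G i)).edges := hi
      obtain ⟨m, hm, hlt⟩ := exists_min G x.u i ((gR i).eu x hi')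
      obtain ⟨y, hy, rfl⟩ := (gR i).edge (gR m) (hrot _ _) (hrot _ _) hm hi'
      exact ⟨y, ⟨m, hy⟩, key m y hy hlt⟩
    · rintro ⟨y, ⟨i, hi⟩, rfl⟩
      obtain ⟨m, hm, hlt⟩ := exists_min G y.u i ((gG i).eu y hi)
      have hy := (gG i).edge (gG m) (hGc _ _) (hGc _ _) hm hi
      exact ⟨m, y, hy, (key m y hy hlt).symm⟩
end CDDM
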